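/- arXiv:2003.02030 — 2 statements merged into one kernel-verified Lean document; each statement's English description precedes it below -/
import Mathlib

section
/- Let X and Y be compact metric spaces, ν a Borel probability measure on X with supp(ν) = X, and φ : X × Y → ℝ a continuous function. Let π₀ be a Borel probability measure on X × Y such that e^φ is a ν-Jacobian of π₀. If π₀ assigns positive measure to every nonempty open subset of X × Y, then φ is the unique continuous function such that e^φ is a ν-Jacobian of π₀. -/
open MeasureTheory ENNReal

noncomputable section

/-- `J` is a `ν`-Jacobian of `pi₀`: it is measurable, nonnegative, satisfies
`∫ J(x,y) dν(x) = 1` for all `y`, and `∬ f(x,y) J(x,y) dν(x) dπ₀(x,y) = ∫ f dπ₀` for every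
bounded measurable `f`. -/
def IsNuJacobianOf {X Y : Type*} [MeasurableSpace X] [MeasurableSpace Y]
    (ν : Measure X) (pi₀ : Measure (X × Y)) (J : X × Y → ℝ) : Prop :=
  Measurable J ∧ (∀ p, 0 ≤ J p) ∧ (∀ y, (∫ x, J (x, y) ∂ν) = 1) ∧
    ∀ f : X × Y → ℝ, Measurable f → (∃ C, ∀ p, |f p| ≤ C) →
      (∫ p, (∫ x, f (x, p.2) * J (x, p.2) ∂ν) ∂pi₀) = ∫ p, f p ∂pi₀

/-- if `supp ν = X`, `φ` is continuous, `e^φ` is a `ν`-Jacobian of `π₀`, and `π₀`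
is positive on nonempty open sets, then `φ` is the unique continuous function whose exponential
is a `ν`-Jacobian of `π₀`. -/
theorem statement13 {X Y : Type*}
    [MetricSpace X] [CompactSpace X] [MeasurableSpace X] [BorelSpace X]
    [MetricSpace Y] [CompactSpace Y] [MeasurableSpace Y] [BorelSpace Y]
    (ν : Measure X) [IsProbabilityMeasure ν] [ν.IsOpenPosMeasure]
    (pi₀ : Measure (X × Y)) [IsProbabilityMeasure pi₀]
    (hpos : ∀ U : Set (X × Y), IsOpen U → U.Nonempty → 0 < pi₀ U)
    (φ : X × Y → ℝ) (hφ : Continuous φ)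
    (hjac : IsNuJacobianOf ν pi₀ (fun p => Real.exp (φ p))) :
    ∀ φ₂ : X × Y → ℝ, Continuous φ₂ →
      IsNuJacobianOf ν pi₀ (fun p => Real.exp (φ₂ p)) → φ₂ = φ := by
  intro φ₂ hφ₂ hjac₂
  obtain ⟨m1, -, -, h1⟩ := hjac
  obtain ⟨m2, -, -, h2⟩ := hjac₂
  have : pi₀.IsOpenPosMeasure := ⟨fun U hU hne => (hpos U hU hne).ne'⟩
  have c1 : Continuous (fun p => Real.exp (φ p)) := Real.continuous_exp.comp hφ
  have c2 : Continuous (fun p => Real.exp (φ₂ p)) := Real.continuous_exp.comp hφ₂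
  set f : X × Y → ℝ := fun p => Real.exp (φ₂ p) - Real.exp (φ p) with hf
  have cf : Continuous f := c2.sub c1
  have bf : ∃ C, ∀ p, |f p| ≤ C := by
    obtain ⟨C, hC⟩ := isCompact_univ.exists_bound_of_continuousOn cf.continuousOn
    exact ⟨C, fun p => hC p (Set.mem_univ p)⟩
  have e1 := h1 f (m2.sub m1) bf
  have e2 := h2 f (m2.sub m1) bf
  beta_reduce at e1 e2
  have intX : ∀ g : X → ℝ, Continuous g → Integrable g ν := fun g hg =>
    hg.integrable_of_hasCompactSupport (HasCompactSupport.of_compactSpace g)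
  have intP : ∀ g : X × Y → ℝ, Continuous g → Integrable g pi₀ := fun g hg =>
    hg.integrable_of_hasCompactSupport (HasCompactSupport.of_compactSpace g)
  have cpar : ∀ g : X × Y → ℝ, Continuous g →
      Continuous (fun p : X × Y => ∫ x, g (x, p.2) ∂ν) := by
    intro g hg
    have := continuous_parametric_integral_of_continuous (μ := ν)
      (f := fun (p : X × Y) (x : X) => g (x, p.2))
      (by simp only [Function.uncurry_def]; fun_prop) isCompact_univ
    simpa using this
  have sec : ∀ (g : X × Y → ℝ) (y : Y), Continuous g → Continuous (fun x => g (x, y)) :=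
    fun g y hg => by fun_prop
  have key : ∫ p : X × Y, (∫ x, f (x, p.2) * f (x, p.2) ∂ν) ∂pi₀ = 0 := by
    have hsub : ∀ p : X × Y, (∫ x, f (x, p.2) * f (x, p.2) ∂ν) =
        (∫ x, f (x, p.2) * Real.exp (φ₂ (x, p.2)) ∂ν)
          - ∫ x, f (x, p.2) * Real.exp (φ (x, p.2)) ∂ν := by
      intro p
      rw [← integral_sub (intX _ (sec (fun q => f q * Real.exp (φ₂ q)) p.2 (cf.mul c2))) (intX _ (sec (fun q => f q * Real.exp (φ q)) p.2 (cf.mul c1)))]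
      congr 1
      ext x
      simp only [hf]
      ring
    simp_rw [hsub]
    rw [integral_sub (intP _ (cpar (fun q => f q * Real.exp (φ₂ q)) (cf.mul c2))) (intP _ (cpar (fun q => f q * Real.exp (φ q)) (cf.mul c1))), e1, e2, sub_self]
  have cg := cpar (fun q => f q * f q) (cf.mul cf)
  have g0 : (fun p : X × Y => ∫ x, f (x, p.2) * f (x, p.2) ∂ν) = 0 := by
    rw [integral_eq_zero_iff_of_nonneg
      (fun p => integral_nonneg fun x => mul_self_nonneg _) (intP _ cg)] at key
    exact (cg.ae_eq_iff_eq pi₀ continuous_const).1 key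
  funext p
  have hp := congrFun g0 p
  have cs := sec (fun q => f q * f q) p.2 (cf.mul cf)
  have hz : (∫ x, f (x, p.2) * f (x, p.2) ∂ν) = 0 := hp
  rw [integral_eq_zero_iff_of_nonneg (fun x => mul_self_nonneg _) (intX _ cs)] at hz
  have hz' := congrFun ((cs.ae_eq_iff_eq ν continuous_const).1 hz) p.1
  have : f p = 0 := mul_self_eq_zero.1 hz'
  exact Real.exp_injective (sub_eq_zero.1 this)

end
end

section
/- Let X and Y be compact metric spaces and π₀ a Borel probability measure on X × Y that assigns positive measure to every nonempty open set, with x-marginal P. Let ν be a Borel probability on X with supp(ν) = X and φ : X × Y → ℝ a continuous function such that e^φ is a ν-Jacobian of π₀, and let ψ = φ − log(dP/dν). Then for every Borel probability measure π on X × Y, −∫ ψ dπ − H^P(π) = −∫ φ dπ − H^ν(π); that is, the information gain IG(π, π₀) := −∫ ψ dπ − H^P(π) can be computed using any a priori probability ν admitting a continuous ν-Jacobian e^φ for π₀. -/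
open MeasureTheory ENNReal ProbabilityTheory

noncomputable section
open scoped Classical

/-- The extended-real integral `∫ f⁺ dμ − ∫ f⁻ dμ`, valued in `EReal`. -/
def eInt {α : Type*} [MeasurableSpace α] (μ : Measure α) (f : α → ℝ) : EReal :=
  ((∫⁻ x, ENNReal.ofReal (f x) ∂μ : ℝ≥0∞) : EReal)
    - ((∫⁻ x, ENNReal.ofReal (-f x) ∂μ : ℝ≥0∞) : EReal)

/-- The extended integral of `f` with respect to `μ` is well defined (not `+∞ − ∞`). -/
def IntWellDef {α : Type*} [MeasurableSpace α] (μ : Measure α) (f : α → ℝ) : Prop :=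
  (∫⁻ x, ENNReal.ofReal (f x) ∂μ ≠ ⊤) ∨ (∫⁻ x, ENNReal.ofReal (-f x) ∂μ ≠ ⊤)

/-- Kullback–Leibler divergence `D_KL(μ | ν) = ∫ log (dμ/dν) dμ` if `μ ≪ ν`, `+∞` otherwise. -/
def KL {α : Type*} [MeasurableSpace α] (μ ν : Measure α) : EReal :=
  if μ ≪ ν then eInt μ (fun x => Real.log ((μ.rnDeriv ν x).toReal)) else ⊤

/-- `S^ν(P) = −sup{∫ c dP : c measurable, ∫ e^c dν = 1, ∫ c dP well defined}`. -/
def SEnt {X : Type*} [MeasurableSpace X] (ν P : Measure X) : EReal :=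
  - sSup { r : EReal | ∃ c : X → ℝ, Measurable c ∧ (∫ x, Real.exp (c x) ∂ν) = 1 ∧
      IntWellDef P c ∧ r = eInt P c }

/-- `H^{ν̂}(π)`: entropy of `π` relative to the probability kernel `ν̂ = κ`, i.e. minus the
supremum of `∫ c dπ` over `κ`-normalized measurable functions with well-defined integral. -/
def Hker {X Y : Type*} [MeasurableSpace X] [MeasurableSpace Y]
    (κ : Kernel Y X) (π : Measure (X × Y)) : EReal :=
  - sSup { r : EReal | ∃ c : X × Y → ℝ, Measurable c ∧
      (∀ y, (∫ x, Real.exp (c (x, y)) ∂(κ y)) = 1) ∧ IntWellDef π c ∧ r = eInt π c }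

/-- `H^ν(π)`: entropy of `π` relative to an a priori probability `ν` on `X`. -/
def Hnu {X Y : Type*} [MeasurableSpace X] [MeasurableSpace Y]
    (ν : Measure X) (π : Measure (X × Y)) : EReal :=
  - sSup { r : EReal | ∃ c : X × Y → ℝ, Measurable c ∧
      (∀ y, (∫ x, Real.exp (c (x, y)) ∂ν) = 1) ∧ IntWellDef π c ∧ r = eInt π c }

/-- The probability `ν̂ dQ` on `X × Y`, defined by
`∫ f d(ν̂ dQ) = ∫_Y ∫_X f(x,y) dν̂^y(x) dQ(y)`. -/
def kernMeas {X Y : Type*} [MeasurableSpace X] [MeasurableSpace Y]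
    (κ : Kernel Y X) (Q : Measure Y) : Measure (X × Y) :=
  (Q.compProd κ).map Prod.swap

lemma eInt_add_aux {α : Type*} [MeasurableSpace α] (μ : Measure α) (c h : α → ℝ)
    (hc : Measurable c) (hh : Measurable h) (hi : Integrable h μ) (hw : IntWellDef μ c) :
    IntWellDef μ (fun x => c x + h x) ∧
      eInt μ (fun x => c x + h x) = eInt μ c + ((∫ x, h x ∂μ : ℝ) : EReal) := by
  have hpf : ∫⁻ x, ENNReal.ofReal (h x) ∂μ ≠ ⊤ := hi.lintegral_lt_top.ne
  have hmf : ∫⁻ x, ENNReal.ofReal (-h x) ∂μ ≠ ⊤ := hi.neg.lintegral_lt_top.ne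
  have hI := integral_eq_lintegral_pos_part_sub_lintegral_neg_part hi
  have m1 : Measurable fun x => ENNReal.ofReal (c x) := by fun_prop
  have m2 : Measurable fun x => ENNReal.ofReal (-c x) := by fun_prop
  have m3 : Measurable fun x => ENNReal.ofReal (h x) := by fun_prop
  have m4 : Measurable fun x => ENNReal.ofReal (-h x) := by fun_prop
  have m5 : Measurable fun x => ENNReal.ofReal (c x + h x) := by fun_prop
  have m6 : Measurable fun x => ENNReal.ofReal (-(c x + h x)) := by fun_prop
  have hA : ∫⁻ x, ENNReal.ofReal (c x + h x) ∂μ ≤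
      ∫⁻ x, ENNReal.ofReal (c x) ∂μ + ∫⁻ x, ENNReal.ofReal (h x) ∂μ := by
    rw [← lintegral_add_left m1]
    exact lintegral_mono fun x => ENNReal.ofReal_add_le
  have hB : ∫⁻ x, ENNReal.ofReal (-(c x + h x)) ∂μ ≤
      ∫⁻ x, ENNReal.ofReal (-c x) ∂μ + ∫⁻ x, ENNReal.ofReal (-h x) ∂μ := by
    rw [← lintegral_add_left m2]
    refine lintegral_mono fun x => ?_
    rw [neg_add]
    exact ENNReal.ofReal_add_le
  have hE : ∫⁻ x, ENNReal.ofReal (c x + h x) ∂μ + ∫⁻ x, ENNReal.ofReal (-c x) ∂μ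
        + ∫⁻ x, ENNReal.ofReal (-h x) ∂μ =
      ∫⁻ x, ENNReal.ofReal (-(c x + h x)) ∂μ + ∫⁻ x, ENNReal.ofReal (c x) ∂μ
        + ∫⁻ x, ENNReal.ofReal (h x) ∂μ := by
    rw [← lintegral_add_left m5, ← lintegral_add_left (by fun_prop : Measurable fun x => ENNReal.ofReal (c x + h x) + ENNReal.ofReal (-c x)),
      ← lintegral_add_left m6, ← lintegral_add_left (by fun_prop : Measurable fun x => ENNReal.ofReal (-(c x + h x)) + ENNReal.ofReal (c x))]
    refine lintegral_congr fun x => ?_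
    simp only [ENNReal.ofReal]
    norm_cast
    rw [← NNReal.coe_inj]
    push_cast [Real.coe_toNNReal']
    have g : ∀ t : ℝ, max t 0 = t + max (-t) 0 := by
      intro t
      rcases le_total t 0 with ht | ht
      · rw [max_eq_right ht, max_eq_left (by linarith)]; ring
      · rw [max_eq_left ht, max_eq_right (by linarith)]; ring
    rw [g (c x + h x), g (c x), g (h x)]
    ring
  unfold IntWellDef eInt at *
  rw [hI]
  generalize ∫⁻ x, ENNReal.ofReal (c x + h x) ∂μ = A' at *
  generalize ∫⁻ x, ENNReal.ofReal (-(c x + h x)) ∂μ = B' at *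
  generalize ∫⁻ x, ENNReal.ofReal (c x) ∂μ = A at *
  generalize ∫⁻ x, ENNReal.ofReal (-c x) ∂μ = B at *
  generalize ∫⁻ x, ENNReal.ofReal (h x) ∂μ = p at *
  generalize ∫⁻ x, ENNReal.ofReal (-h x) ∂μ = q at *
  lift p to NNReal using hpf
  lift q to NNReal using hmf
  have r : ∀ t : NNReal, ((t : ℝ≥0∞) : EReal) = ((t : ℝ) : EReal) := fun t => rfl
  induction A with
  | top =>
    induction B with
    | top => simp at hw
    | coe B =>
      have hB' : B' ≠ ⊤ := ne_top_of_le_ne_top (by simp) hB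
      lift B' to NNReal using hB'
      have : A' = ⊤ := by
        induction A' with
        | top => rfl
        | coe a => exfalso; simp at hE
      subst this
      refine ⟨Or.inr (by simp), ?_⟩
      simp only [r, EReal.coe_ennreal_top, EReal.top_sub_coe, EReal.top_add_coe]
  | coe A =>
    have hA' : A' ≠ ⊤ := ne_top_of_le_ne_top (by simp) hA
    lift A' to NNReal using hA'
    refine ⟨Or.inl (by simp), ?_⟩
    induction B with
    | top =>
      have : B' = ⊤ := by
        induction B' with
        | top => rfl
        | coe a =>
          exfalso; replace hE := hE.symm; simp at hE
      subst this
      simp only [r, EReal.coe_ennreal_top, EReal.sub_top, EReal.bot_add]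
    | coe B =>
      have hB' : B' ≠ ⊤ := ne_top_of_le_ne_top (by simp) hB
      lift B' to NNReal using hB'
      norm_cast at hE
      have hE' := congrArg (fun t : NNReal => (t : ℝ)) hE
      push_cast at hE'
      simp only [r, ENNReal.coe_toReal]
      norm_cast
      linarith

lemma Hnu_shift {X Y : Type*} [MeasurableSpace X] [MeasurableSpace Y]
    (m₁ m₂ : Measure X) (π : Measure (X × Y)) (h : X × Y → ℝ)
    (hh : Measurable h) (hi : Integrable h π)
    (H : ∀ c : X × Y → ℝ, ∀ y, (∫ x, Real.exp (c (x, y)) ∂m₁) = 1 →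
      (∫ x, Real.exp (c (x, y) + h (x, y)) ∂m₂) = 1) :
    - Hnu m₁ π ≤ - Hnu m₂ π - ((∫ x, h x ∂π : ℝ) : EReal) := by
  unfold Hnu
  rw [neg_neg, neg_neg]
  refine sSup_le ?_
  rintro r ⟨c, hc, hn, hw, rfl⟩
  obtain ⟨w, e⟩ := eInt_add_aux π c h hc hh hi hw
  rw [EReal.le_sub_iff_add_le (by simp) (by simp), ← e]
  exact le_sSup ⟨_, hc.add hh, fun y => H c y (hn y), w, rfl⟩

/-- for `π₀` positive on open sets with `x`-marginal `P`, an a priori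
probability `ν` of full support, and a continuous `φ` with `e^φ` a `ν`-Jacobian of `π₀`,
setting `ψ = φ − log (dP/dν)` (where `dP/dν(x) = ∫ e^{φ(x,y)} dQ(y)`, `Q` the `y`-marginal of
`π₀`), one has, for every Borel probability `π` on `X × Y`,
`−∫ ψ dπ − H^P(π) = −∫ φ dπ − H^ν(π)`: the information gain `IG(π, π₀)` can be computed using
any a priori probability `ν` admitting a continuous `ν`-Jacobian `e^φ` for `π₀`. -/
theorem statement14 {X Y : Type*}
    [MetricSpace X] [CompactSpace X] [MeasurableSpace X] [BorelSpace X]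
    [MetricSpace Y] [CompactSpace Y] [MeasurableSpace Y] [BorelSpace Y]
    (ν : Measure X) [IsProbabilityMeasure ν] [ν.IsOpenPosMeasure]
    (pi₀ : Measure (X × Y)) [IsProbabilityMeasure pi₀]
    (hpos : ∀ U : Set (X × Y), IsOpen U → U.Nonempty → 0 < pi₀ U)
    (P : Measure X) (Q : Measure Y)
    (hP : pi₀.map Prod.fst = P) (hQ : pi₀.map Prod.snd = Q)
    (φ : X × Y → ℝ) (hφ : Continuous φ)
    (hjac : IsNuJacobianOf ν pi₀ (fun p => Real.exp (φ p))) :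
    ∀ pi : Measure (X × Y), IsProbabilityMeasure pi →
      - ((∫ p, (φ p - Real.log (∫ y, Real.exp (φ (p.1, y)) ∂Q)) ∂pi : ℝ) : EReal)
          - Hnu P pi
        = - ((∫ p, φ p ∂pi : ℝ) : EReal) - Hnu ν pi := by
  intro pi hpi
  obtain ⟨-, -, -, hJ⟩ := hjac
  have hQp : IsProbabilityMeasure Q := by
    rw [← hQ]; exact Measure.isProbabilityMeasure_map (by fun_prop)
  obtain ⟨g, hg⟩ : ∃ g : X → ℝ, g = fun x => ∫ y, Real.exp (φ (x, y)) ∂Q := ⟨_, rfl⟩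
  have hexpc : Continuous fun p : X × Y => Real.exp (φ p) := by fun_prop
  obtain ⟨C, hC⟩ : ∃ C, ∀ p, ‖Real.exp (φ p)‖ ≤ C := by
    obtain ⟨C, hC⟩ := isCompact_univ.exists_bound_of_continuousOn hexpc.continuousOn
    exact ⟨C, fun p => hC p trivial⟩
  have hgc : Continuous g := by
    rw [hg]
    refine continuous_of_dominated (bound := fun _ => C) ?_ ?_ (integrable_const _) ?_
    · intro x
      exact (by fun_prop : Continuous fun y => Real.exp (φ (x, y))).aestronglyMeasurable
    · intro x; exact Filter.Eventually.of_forall fun y => hC _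
    · exact Filter.Eventually.of_forall fun y => by fun_prop
  have hgpos : ∀ x, 0 < g x := by
    intro x
    rw [hg]
    refine integral_exp_pos (f := fun y => φ (x, y)) ?_
    exact Integrable.of_bound
      (by fun_prop : Continuous fun y => Real.exp (φ (x, y))).aestronglyMeasurable C
      (Filter.Eventually.of_forall fun y => hC _)
  have hPd : P = ν.withDensity (fun x => ENNReal.ofReal (g x)) := by
    ext A hA
    rw [withDensity_apply _ hA, ← hP, Measure.map_apply (by fun_prop) hA]
    have h1 := hJ ((Prod.fst ⁻¹' A).indicator fun _ => 1)
      (measurable_const.indicator (measurable_fst hA))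
      ⟨1, fun p => by by_cases hp : p ∈ Prod.fst ⁻¹' A <;> simp [hp]⟩
    rw [integral_indicator_const _ (measurable_fst hA), smul_eq_mul, mul_one] at h1
    have hFm : StronglyMeasurable fun z : Y × X => A.indicator (fun x => Real.exp (φ (x, z.1))) z.2 := by
      have : (fun z : Y × X => A.indicator (fun x => Real.exp (φ (x, z.1))) z.2) =
          (Prod.snd ⁻¹' A).indicator (fun z : Y × X => Real.exp (φ (z.2, z.1))) := by
        ext z; by_cases hz : z.2 ∈ A <;> simp [hz]
      rw [this]
      exact (by fun_prop : Continuous fun z : Y × X => Real.exp (φ (z.2, z.1))).stronglyMeasurable.indicator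
        (measurable_snd hA)
    have h2 : (∫ y, ∫ x, A.indicator (fun x => Real.exp (φ (x, y))) x ∂ν ∂Q) =
        pi₀.real (Prod.fst ⁻¹' A) := by
      rw [← h1, ← hQ, integral_map (by fun_prop)]
      · refine integral_congr_ae (Filter.Eventually.of_forall fun p => ?_)
        refine integral_congr_ae (Filter.Eventually.of_forall fun x => ?_)
        by_cases hx : x ∈ A <;> simp [hx]
      · exact hFm.integral_prod_right'.aestronglyMeasurable
    rw [integral_integral_swap] at h2
    · have h3 : (∫ x in A, g x ∂ν) = pi₀.real (Prod.fst ⁻¹' A) := by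
        rw [← h2, ← integral_indicator hA]
        refine integral_congr_ae (Filter.Eventually.of_forall fun x => ?_)
        by_cases hx : x ∈ A <;> simp [hx, hg]
      have hgi : Integrable g ν := by
        obtain ⟨D, hD⟩ := isCompact_univ.exists_bound_of_continuousOn hgc.continuousOn
        exact Integrable.of_bound hgc.aestronglyMeasurable D
          (Filter.Eventually.of_forall fun x => hD x trivial)
      rw [← ofReal_integral_eq_lintegral_ofReal hgi.integrableOn
        (Filter.Eventually.of_forall fun x => (hgpos x).le), h3, ofReal_measureReal]
    · refine Integrable.of_bound hFm.aestronglyMeasurable C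
        (Filter.Eventually.of_forall fun z => ?_)
      exact (norm_indicator_le_norm_self (fun x => Real.exp (φ (x, z.1))) z.2).trans (hC _)
  have hint : ∀ f : X → ℝ, ∫ x, f x ∂P = ∫ x, g x * f x ∂ν := by
    intro f
    rw [hPd, integral_withDensity_eq_integral_toReal_smul (by fun_prop)
      (Filter.Eventually.of_forall fun x => ENNReal.ofReal_lt_top)]
    refine integral_congr_ae (Filter.Eventually.of_forall fun x => ?_)
    simp [ENNReal.toReal_ofReal (hgpos x).le]
  have hLc : Continuous fun p : X × Y => Real.log (g p.1) :=
    (hgc.comp continuous_fst).log fun p => (hgpos _).ne'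
  have hcint : ∀ f : X × Y → ℝ, Continuous f → Integrable f pi := by
    intro f hf
    obtain ⟨D, hD⟩ := isCompact_univ.exists_bound_of_continuousOn hf.continuousOn
    exact Integrable.of_bound hf.aestronglyMeasurable D
      (Filter.Eventually.of_forall fun x => hD x trivial)
  have s1 := Hnu_shift P ν pi (fun p => Real.log (g p.1)) hLc.measurable (hcint _ hLc) (by
    intro c y hc
    rw [hint] at hc
    rw [← hc]
    refine integral_congr_ae (Filter.Eventually.of_forall fun x => ?_)
    simp only [Real.exp_add, Real.exp_log (hgpos x)]
    ring)
  have s2 := Hnu_shift ν P pi (fun p => -Real.log (g p.1)) hLc.neg.measurable (hcint _ hLc.neg) (by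
    intro c y hc
    rw [hint, ← hc]
    refine integral_congr_ae (Filter.Eventually.of_forall fun x => ?_)
    simp only [Real.exp_add, Real.exp_neg, Real.exp_log (hgpos x)]
    have := (hgpos x).ne'
    field_simp)
  have hψ : (∫ p, (φ p - Real.log (∫ y, Real.exp (φ (p.1, y)) ∂Q)) ∂pi) =
      (∫ p, φ p ∂pi) - ∫ p, Real.log (g p.1) ∂pi := by
    rw [← integral_sub (hcint _ hφ) (hcint _ hLc), hg]
  rw [hψ]
  rw [integral_neg] at s2
  generalize (∫ p, φ p ∂pi) = b at *
  generalize (∫ p, Real.log (g p.1) ∂pi) = l at *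
  rw [sub_eq_add_neg, sub_eq_add_neg (-(b : EReal))]
  generalize - Hnu P pi = S at *
  generalize - Hnu ν pi = T at *
  induction S with
  | bot =>
    induction T with
    | bot => simp
    | top => simp [← EReal.coe_neg] at s2
    | coe t => simp [← EReal.coe_neg, ← EReal.coe_sub] at s2
  | top =>
    induction T with
    | bot => simp at s1
    | top => simp [← EReal.coe_neg, ← EReal.coe_sub]
    | coe t => simp [← EReal.coe_sub] at s1
  | coe u =>
    induction T with
    | bot => simp at s1
    | top => simp [← EReal.coe_neg, ← EReal.coe_sub] at s2; exact absurd s2 (by norm_cast; exact EReal.coe_ne_top _)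
    | coe t =>
      norm_cast at *
      linarith

end
end
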